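/- Suppose λ and μ are r-multipartitions of the same integer n. Then λ and μ have the same hub if and only if they have the same residue multiset, i.e., Res_a(λ) = Res_a(μ). -/

import Mathlib

/-!
Combinatorial framework for multipartitions, residues, β-sets, abacus levels,
weights, hubs, core blocks and Scopes-type moves, following Fayers and the paper.
Rows and columns of Young diagrams are indexed from 0, so the node in row `b`
and column `c` (0-based) of component `j` has residue `a j + c - b` mod `e`.
-/

open scoped Classical

namespace AK

/-- A partition, given by its (antitone, finitely supported) sequence of parts,
rows indexed from `0`. -/
structure PartitionFun : Type where
  part : ℕ → ℕ
  antitone : Antitone part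
  finite_support : ∃ N, ∀ b, N ≤ b → part b = 0

/-- The node in row `b`, column `c` (0-based) belongs to the Young diagram. -/
def PartitionFun.InDiag (lam : PartitionFun) (b c : ℕ) : Prop := c < lam.part b

/-- The node `(b,c)` is removable: deleting it leaves the diagram of a partition. -/
def PartitionFun.Removable (lam : PartitionFun) (b c : ℕ) : Prop :=
  lam.part b = c + 1 ∧ lam.part (b + 1) ≤ c

/-- The node `(b,c)` is addable: adjoining it gives the diagram of a partition. -/
def PartitionFun.Addable (lam : PartitionFun) (b c : ℕ) : Prop :=
  lam.part b = c ∧ (b = 0 ∨ lam.part b < lam.part (b - 1))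

/-- An `r`-multipartition. -/
abbrev Multipartition (r : ℕ) := Fin r → PartitionFun

/-- Nodes: `(b, c, j)` with row `b`, column `c`, component `j`. -/
abbrev Node (r : ℕ) := ℕ × ℕ × Fin r

/-- The Young diagram of a multipartition, as a set of nodes. -/
def diag {r : ℕ} (lam : Multipartition r) : Set (Node r) :=
  {x | (lam x.2.2).InDiag x.1 x.2.1}

/-- The size `n` of a multipartition of `n`. -/
noncomputable def msize {r : ℕ} (lam : Multipartition r) : ℕ :=
  Set.ncard (diag lam)

/-- `c_i(λ)`: the number of nodes of residue `i` (mod `e`). -/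
noncomputable def nodeCount {r : ℕ} (e : ℕ) (a : Fin r → ℤ) (lam : Multipartition r)
    (i : ℤ) : ℕ :=
  Set.ncard {x : Node r | (lam x.2.2).InDiag x.1 x.2.1 ∧
    (a x.2.2 + (x.2.1 : ℤ) - (x.1 : ℤ)) % (e : ℤ) = i % e}

/-- Number of removable nodes of residue `i` in component `j`. -/
noncomputable def removableCount {r : ℕ} (e : ℕ) (a : Fin r → ℤ) (lam : Multipartition r)
    (i : ℤ) (j : Fin r) : ℕ :=
  Set.ncard {p : ℕ × ℕ | (lam j).Removable p.1 p.2 ∧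
    (a j + (p.2 : ℤ) - (p.1 : ℤ)) % (e : ℤ) = i % e}

/-- Number of addable nodes of residue `i` in component `j`. -/
noncomputable def addableCount {r : ℕ} (e : ℕ) (a : Fin r → ℤ) (lam : Multipartition r)
    (i : ℤ) (j : Fin r) : ℕ :=
  Set.ncard {p : ℕ × ℕ | (lam j).Addable p.1 p.2 ∧
    (a j + (p.2 : ℤ) - (p.1 : ℤ)) % (e : ℤ) = i % e}

/-- `δ^j_i(λ)` = (removable `i`-nodes of component `j`) − (addable `i`-nodes of component `j`). -/
noncomputable def delta {r : ℕ} (e : ℕ) (a : Fin r → ℤ) (lam : Multipartition r)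
    (i : ℤ) (j : Fin r) : ℤ :=
  (removableCount e a lam i j : ℤ) - (addableCount e a lam i j : ℤ)

/-- The hub `δ_i(λ) = Σ_j δ^j_i(λ)`. -/
noncomputable def hub {r : ℕ} (e : ℕ) (a : Fin r → ℤ) (lam : Multipartition r) (i : ℤ) : ℤ :=
  ∑ j : Fin r, delta e a lam i j

/-- Two multipartitions have the same hub. -/
def SameHub {r : ℕ} (e : ℕ) (a : Fin r → ℤ) (lam mu : Multipartition r) : Prop :=
  ∀ i : ℤ, hub e a lam i = hub e a mu i

/-- `d_i(m) = min { δ^j_i(m) : 1 ≤ j ≤ r }`. -/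
noncomputable def dmin {r : ℕ} (e : ℕ) (a : Fin r → ℤ) (lam : Multipartition r) (i : ℤ) : ℤ :=
  sInf {x : ℤ | ∃ j : Fin r, delta e a lam i j = x}

/-- The weight `w(λ) = Σ_j c_{a_j}(λ) − (1/2) Σ_{i∈ℤ/eℤ} (c_i(λ) − c_{i+1}(λ))²`. -/
noncomputable def weight {r : ℕ} (e : ℕ) (a : Fin r → ℤ) (lam : Multipartition r) : ℚ :=
  (∑ j : Fin r, (nodeCount e a lam (a j) : ℚ)) -
    (1 / 2 : ℚ) * ∑ i ∈ Finset.range e,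
      ((nodeCount e a lam (i : ℤ) : ℚ) - (nodeCount e a lam ((i : ℤ) + 1) : ℚ)) ^ 2

/-- The β-set `B^j = {λ_b + a_j − b : b ≥ 1}` (here with rows indexed from 0). -/
def betaSet (aj : ℤ) (lam : PartitionFun) : Set ℤ :=
  {x | ∃ b : ℕ, x = (lam.part b : ℤ) + aj - ((b : ℤ) + 1)}

/-- A partition is an `e`-core: `β ∈ B` implies `β − e ∈ B`. -/
def IsECore (e : ℕ) (aj : ℤ) (lam : PartitionFun) : Prop :=
  ∀ x ∈ betaSet aj lam, x - (e : ℤ) ∈ betaSet aj lam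

/-- A multicore: all components are `e`-cores. -/
def IsMulticore {r : ℕ} (e : ℕ) (a : Fin r → ℤ) (lam : Multipartition r) : Prop :=
  ∀ j, IsECore e (a j) (lam j)

/-- `ℓ^a_{ij}(λ)`: the level of the lowest bead on runner `i`, i.e. the largest `x`
with `x·e + i` in the β-set. -/
noncomputable def level (e : ℕ) (aj : ℤ) (lam : PartitionFun) (i : ℕ) : ℤ :=
  sSup {x : ℤ | x * (e : ℤ) + (i : ℤ) ∈ betaSet aj lam}

/-- `γ^{jk}_i(λ) = ℓ^a_{ij}(λ) − ℓ^a_{ik}(λ)`. -/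
noncomputable def gamma {r : ℕ} (e : ℕ) (a : Fin r → ℤ) (lam : Multipartition r)
    (i : ℕ) (j k : Fin r) : ℤ :=
  level e (a j) (lam j) i - level e (a k) (lam k) i

/-- `γ^{jk}_{il}(λ) = γ^{jk}_i(λ) − γ^{jk}_l(λ)`. -/
noncomputable def gammaD {r : ℕ} (e : ℕ) (a : Fin r → ℤ) (lam : Multipartition r)
    (i l : ℕ) (j k : Fin r) : ℤ :=
  gamma e a lam i j k - gamma e a lam l j k

/-- Move a bead from runner `i` to runner `l` in the β-set `S`: replace the largest
element of `S` congruent to `i` mod `e` by the smallest integer congruent to `l`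
mod `e` not in `S`. -/
noncomputable def moveBead (e : ℕ) (i l : ℕ) (S : Set ℤ) : Set ℤ :=
  insert (sInf {x : ℤ | x % (e : ℤ) = (l : ℤ) % e ∧ x ∉ S})
    (S \ {sSup {x : ℤ | x % (e : ℤ) = (i : ℤ) % e ∧ x ∈ S}})

/-- The effect of `s^{jk}_{il}` on the tuple of β-sets: move a bead from runner `i`
to runner `l` in component `j`, and from runner `l` to runner `i` in component `k`. -/
noncomputable def swapSets {r : ℕ} (e i l : ℕ) (j k : Fin r) (S : Fin r → Set ℤ) :
    Fin r → Set ℤ :=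
  Function.update (Function.update S j (moveBead e i l (S j))) k
    (moveBead e l i (Function.update S j (moveBead e i l (S j)) k))

/-- `m' = s^{jk}_{il}(m)`, expressed via β-sets. -/
def IsSwap {r : ℕ} (e : ℕ) (a : Fin r → ℤ) (i l : ℕ) (j k : Fin r)
    (m m' : Multipartition r) : Prop :=
  ∀ j', betaSet (a j') (m' j') = swapSets e i l j k (fun t => betaSet (a t) (m t)) j'

/-- `λ` lies in a core block: its weight is minimal among the weights of all
multipartitions with the same hub. -/
def MinimalWeight {r : ℕ} (e : ℕ) (a : Fin r → ℤ) (lam : Multipartition r) : Prop :=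
  ∀ mu : Multipartition r, SameHub e a lam mu → weight e a lam ≤ weight e a mu

/-- `(b_0,…,b_{e−1})` is a base tuple for `mu` with respect to the multicharge `a'`
(congruent to `a` componentwise mod `e`): each `ℓ^{a'}_{ij}(mu)` is `b i` or `b i + 1`. -/
def IsBaseTuple {r : ℕ} (e : ℕ) (a : Fin r → ℤ) (mu : Multipartition r)
    (a' : Fin r → ℤ) (b : ℕ → ℤ) : Prop :=
  (∀ j, (e : ℤ) ∣ (a' j - a j)) ∧
    ∀ i < e, ∀ j, level e (a' j) (mu j) i = b i ∨ level e (a' j) (mu j) i = b i + 1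

/-- `K_i(C)` for the core block of `mu`: among all base tuples (over all admissible
multicharges), take `b i` maximal and then `b (i−1)` minimal, and set
`K_i = b_i − b_{i−1} − 1` for `i ≠ 0`, `K_0 = b_0 − b_{e−1} − 2`. -/
noncomputable def Kconst {r : ℕ} (e : ℕ) (a : Fin r → ℤ) (mu : Multipartition r)
    (i : ℕ) : ℤ :=
  let Bi : ℤ := sSup {x : ℤ | ∃ a' bt, IsBaseTuple e a mu a' bt ∧ bt i = x}
  let iprev : ℕ := if i = 0 then e - 1 else i - 1
  let Bp : ℤ := sInf {x : ℤ | ∃ a' bt, IsBaseTuple e a mu a' bt ∧ bt i = Bi ∧ bt iprev = x}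
  Bi - Bp - (if i = 0 then 2 else 1)

/-- The map `φ_i : ℤ → ℤ`. -/
def phiMap (e i : ℕ) (x : ℤ) : ℤ :=
  if x % (e : ℤ) = ((i : ℤ) - 1) % e then x + 1
  else if x % (e : ℤ) = (i : ℤ) % e then x - 1
  else x

/-- Lexicographic order on multipartitions: `λ > μ`. -/
def lexGT {r : ℕ} (lam mu : Multipartition r) : Prop :=
  ∃ j : Fin r, (∀ j' < j, (lam j').part = (mu j').part) ∧
    ∃ i : ℕ, (∀ i' < i, (lam j).part i' = (mu j).part i') ∧
      (mu j).part i < (lam j).part i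

/-- `x` is above `y`: `j < j'` or (`j = j'` and `b < b'`). -/
def NodeAbove {r : ℕ} (x y : Node r) : Prop :=
  x.2.2 < y.2.2 ∨ (x.2.2 = y.2.2 ∧ x.1 < y.1)

/-- The order on nodes: `x < y` iff `y` is above `x`. -/
def NodeLT {r : ℕ} (x y : Node r) : Prop := NodeAbove y x

/-- `N_A(λ)` = (addable `i`-nodes of `λ` below `A`) − (removable `i`-nodes of `λ` below `A`). -/
noncomputable def Nfac {r : ℕ} (e : ℕ) (a : Fin r → ℤ) (lam : Multipartition r)
    (i : ℤ) (A : Node r) : ℤ :=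
  (Set.ncard {y : Node r | (lam y.2.2).Addable y.1 y.2.1 ∧
      (a y.2.2 + (y.2.1 : ℤ) - (y.1 : ℤ)) % (e : ℤ) = i % e ∧ NodeAbove A y} : ℤ) -
  (Set.ncard {y : Node r | (lam y.2.2).Removable y.1 y.2.1 ∧
      (a y.2.2 + (y.2.1 : ℤ) - (y.1 : ℤ)) % (e : ℤ) = i % e ∧ NodeAbove A y} : ℤ)

/-- `lam` is obtained from `mu` by adding one `e`-rim hook to some component:
on β-sets, some `β ∈ B^j` with `β + e ∉ B^j` is replaced by `β + e`. -/
def AddRimHook {r : ℕ} (e : ℕ) (a : Fin r → ℤ) (mu lam : Multipartition r) : Prop :=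
  ∃ (j : Fin r) (β : ℤ), β ∈ betaSet (a j) (mu j) ∧ β + (e : ℤ) ∉ betaSet (a j) (mu j) ∧
    betaSet (a j) (lam j) = insert (β + (e : ℤ)) (betaSet (a j) (mu j) \ {β}) ∧
    ∀ j' ≠ j, betaSet (a j') (lam j') = betaSet (a j') (mu j')

/-- The number of inversions (length) of a permutation of `Fin d`. -/
noncomputable def permLength (d : ℕ) (σ : Equiv.Perm (Fin d)) : ℕ :=
  (Finset.univ.filter (fun p : Fin d × Fin d => p.1 < p.2 ∧ σ p.2 < σ p.1)).card

noncomputable def resInd (e : ℕ) (i x : ℤ) : ℤ := if x % (e : ℤ) = i % (e : ℤ) then 1 else 0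

theorem resInd_shift (e : ℕ) (i x k : ℤ) : resInd e (i + k) x = resInd e i (x - k) := by
  unfold resInd
  have : (x % (e : ℤ) = (i + k) % (e : ℤ)) ↔ ((x - k) % (e : ℤ) = i % (e : ℤ)) := by
    constructor
    · intro h
      have := Int.ModEq.sub_right k (show x ≡ i + k [ZMOD e] from h)
      rw [add_sub_cancel_right] at this
      exact this
    · intro h
      have := Int.ModEq.add_right k (show x - k ≡ i [ZMOD e] from h)
      rw [sub_add_cancel] at this
      exact this
  simp only [this]

theorem sum_resInd (e : ℕ) (he : 2 ≤ e) (x : ℤ) :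
    ∑ i ∈ Finset.range e, resInd e (i : ℤ) x = 1 := by
  unfold resInd
  have h0 : 0 ≤ x % (e : ℤ) := Int.emod_nonneg _ (by omega)
  have h1 : x % (e : ℤ) < e := Int.emod_lt_of_pos _ (by omega)
  rw [Finset.sum_eq_single (x % (e : ℤ)).toNat]
  · rw [if_pos]
    rw [Int.toNat_of_nonneg h0]; simp
  · intro b hb hne
    rw [if_neg]
    intro h
    rw [Finset.mem_range] at hb
    rw [Int.emod_eq_of_lt (a := (b : ℤ)) (by omega) (by omega)] at h
    omega
  · intro h
    exfalso; apply h; rw [Finset.mem_range]; omega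

theorem exists_bounds {r : ℕ} (lam : Multipartition r) :
    ∃ N M : ℕ, ∀ j, (∀ b, N ≤ b → (lam j).part b = 0) ∧ ∀ b, (lam j).part b ≤ M := by
  choose N hN using fun j => (lam j).finite_support
  refine ⟨∑ j, N j, ∑ j, (lam j).part 0, fun j => ⟨fun b hb => hN j b ?_, fun b => ?_⟩⟩
  · exact (Finset.single_le_sum (f := N) (fun _ _ => Nat.zero_le _) (Finset.mem_univ j)).trans hb
  · exact ((lam j).antitone (Nat.zero_le b)).trans
      (Finset.single_le_sum (f := fun j => (lam j).part 0) (fun _ _ => Nat.zero_le _)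
        (Finset.mem_univ j))

theorem count_eq {r : ℕ} (lam : Multipartition r) (N M : ℕ)
    (h : ∀ j, (∀ b, N ≤ b → (lam j).part b = 0) ∧ ∀ b, (lam j).part b ≤ M)
    (P : Node r → Prop) :
    ((Set.ncard {x : Node r | (lam x.2.2).InDiag x.1 x.2.1 ∧ P x} : ℕ) : ℤ) =
      ∑ j, ∑ b ∈ Finset.range N, ∑ c ∈ Finset.range ((lam j).part b),
        if P (b, c, j) then 1 else 0 := by
  have hs : {x : Node r | (lam x.2.2).InDiag x.1 x.2.1 ∧ P x} =
      (((Finset.range N ×ˢ (Finset.range M ×ˢ (Finset.univ : Finset (Fin r)))).filter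
        (fun x : Node r => x.2.1 < (lam x.2.2).part x.1 ∧ P x) : Finset (Node r)) :
          Set (Node r)) := by
    ext ⟨b, c, j⟩
    simp only [PartitionFun.InDiag, Set.mem_ofPred_eq, Finset.coe_filter, Finset.mem_product,
      Finset.mem_range, Finset.mem_univ, and_true]
    constructor
    · rintro ⟨h1, h2⟩
      refine ⟨⟨?_, lt_of_lt_of_le h1 ((h j).2 b)⟩, h1, h2⟩
      by_contra hb
      have := (h j).1 b (by omega)
      omega
    · exact fun h => h.2
  rw [hs, Set.ncard_coe_finset, Finset.card_filter, Finset.sum_product]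
  simp only [Finset.sum_product]
  push_cast
  rw [Finset.sum_congr rfl (fun b _ => Finset.sum_comm), Finset.sum_comm]
  refine Finset.sum_congr rfl fun j _ => Finset.sum_congr rfl fun b _ => ?_
  have hsub : Finset.range ((lam j).part b) ⊆ Finset.range M := by
    intro c; simp only [Finset.mem_range]; have := (h j).2 b; omega
  rw [← Finset.sum_subset hsub]
  · refine Finset.sum_congr rfl fun c hc => ?_
    rw [Finset.mem_range] at hc
    simp [hc]
  · intro c _ hc
    rw [Finset.mem_range] at hc
    simp [hc]

theorem rem_eq (p : PartitionFun) (N : ℕ) (h : ∀ b, N ≤ b → p.part b = 0) (e : ℕ) (a i : ℤ) :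
    ((Set.ncard {x : ℕ × ℕ | p.Removable x.1 x.2 ∧
      (a + (x.2 : ℤ) - (x.1 : ℤ)) % (e : ℤ) = i % e} : ℕ) : ℤ) =
    ∑ b ∈ Finset.range N, if p.part (b + 1) < p.part b then
      resInd e i (a + p.part b - 1 - b) else 0 := by
  have hs : {x : ℕ × ℕ | p.Removable x.1 x.2 ∧
      (a + (x.2 : ℤ) - (x.1 : ℤ)) % (e : ℤ) = i % e} =
      ((((Finset.range N).filter (fun b : ℕ => p.part (b + 1) < p.part b ∧
        (a + p.part b - 1 - (b : ℤ)) % (e : ℤ) = i % e)).image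
          (fun b => (b, p.part b - 1)) : Finset (ℕ × ℕ)) : Set (ℕ × ℕ)) := by
    ext ⟨b, c⟩
    simp only [PartitionFun.Removable, Set.mem_ofPred_eq, Finset.coe_image, Finset.coe_filter,
      Finset.mem_range, Set.mem_image, Prod.mk.injEq]
    constructor
    · rintro ⟨⟨h1, h2⟩, h3⟩
      refine ⟨b, ⟨?_, by omega, ?_⟩, rfl, by omega⟩
      · by_contra hb
        have := h b (by omega)
        omega
      · rw [← h3, h1]; push_cast; congr 1; ring
    · rintro ⟨b', ⟨h1, h2, h3⟩, rfl, rfl⟩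
      refine ⟨⟨by omega, by omega⟩, ?_⟩
      rw [← h3]; congr 1
      have : ((p.part b' - 1 : ℕ) : ℤ) = p.part b' - 1 := by omega
      rw [this]; ring
  rw [hs, Set.ncard_coe_finset, Finset.card_image_of_injective, Finset.card_filter]
  · push_cast
    refine Finset.sum_congr rfl fun b _ => ?_
    unfold resInd
    by_cases h1 : p.part (b + 1) < p.part b <;> simp [h1]
  · intro x y hxy
    exact (Prod.mk.inj hxy).1

theorem add_eq (p : PartitionFun) (N : ℕ) (h : ∀ b, N ≤ b → p.part b = 0) (e : ℕ) (a i : ℤ) :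
    ((Set.ncard {x : ℕ × ℕ | p.Addable x.1 x.2 ∧
      (a + (x.2 : ℤ) - (x.1 : ℤ)) % (e : ℤ) = i % e} : ℕ) : ℤ) =
    ∑ b ∈ Finset.range (N + 1), if (b = 0 ∨ p.part b < p.part (b - 1)) then
      resInd e i (a + p.part b - b) else 0 := by
  have hs : {x : ℕ × ℕ | p.Addable x.1 x.2 ∧
      (a + (x.2 : ℤ) - (x.1 : ℤ)) % (e : ℤ) = i % e} =
      ((((Finset.range (N + 1)).filter (fun b : ℕ => (b = 0 ∨ p.part b < p.part (b - 1)) ∧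
        (a + p.part b - (b : ℤ)) % (e : ℤ) = i % e)).image
          (fun b => (b, p.part b)) : Finset (ℕ × ℕ)) : Set (ℕ × ℕ)) := by
    ext ⟨b, c⟩
    simp only [PartitionFun.Addable, Set.mem_ofPred_eq, Finset.coe_image, Finset.coe_filter,
      Finset.mem_range, Set.mem_image, Prod.mk.injEq]
    constructor
    · rintro ⟨⟨rfl, h2⟩, h3⟩
      refine ⟨b, ⟨?_, h2, h3⟩, rfl, rfl⟩
      by_contra hb
      have := h (b - 1) (by omega)
      omega
    · rintro ⟨b', ⟨h1, h2, h3⟩, rfl, rfl⟩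
      exact ⟨⟨rfl, h2⟩, h3⟩
  rw [hs, Set.ncard_coe_finset, Finset.card_image_of_injective, Finset.card_filter]
  · push_cast
    refine Finset.sum_congr rfl fun b _ => ?_
    unfold resInd
    by_cases h1 : (b = 0 ∨ p.part b < p.part (b - 1)) <;> simp [h1]
  · intro x y hxy
    exact (Prod.mk.inj hxy).1

theorem rem_sub_add (p : PartitionFun) (N : ℕ) (h : ∀ b, N ≤ b → p.part b = 0) (f : ℤ → ℤ)
    (a : ℤ) :
    (∑ b ∈ Finset.range N, if p.part (b + 1) < p.part b then f (a + p.part b - 1 - b) else 0) -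
    (∑ b ∈ Finset.range (N + 1), if (b = 0 ∨ p.part b < p.part (b - 1)) then
      f (a + p.part b - b) else 0) =
    (∑ b ∈ Finset.range N, ∑ c ∈ Finset.range (p.part b),
      (2 * f (a + c - b) - f (a + c - b + 1) - f (a + c - b - 1))) - f a := by
  have hrow : ∀ b : ℕ, ∑ c ∈ Finset.range (p.part b),
      (2 * f (a + c - b) - f (a + c - b + 1) - f (a + c - b - 1)) =
      f (a - b) - f (a - b - 1) - f (a + p.part b - b) + f (a + p.part b - 1 - b) := by
    intro b
    generalize p.part b = m
    induction m with
    | zero => simp; rw [show a - 1 - (b : ℤ) = a - b - 1 by ring]; ring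
    | succ m ih =>
      rw [Finset.sum_range_succ, ih]; push_cast
      rw [show a + (m + 1 : ℤ) - b = a + m - b + 1 by ring,
        show a + (m + 1 : ℤ) - 1 - b = a + m - b by ring,
        show a + (m : ℤ) - 1 - b = a + m - b - 1 by ring]
      ring
  have htel : ∑ b ∈ Finset.range N, (f (a - b) - f (a - b - 1)) = f a - f (a - N) := by
    have := Finset.sum_range_sub' (fun b : ℕ => f (a - b)) N
    simp only [Nat.cast_zero, sub_zero] at this
    rw [← this]
    refine Finset.sum_congr rfl fun b _ => ?_
    push_cast
    rw [show a - ((b : ℤ) + 1) = a - b - 1 by ring]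
  have hfull : ∑ b ∈ Finset.range (N + 1), f (a + p.part b - b) =
      ∑ b ∈ Finset.range N, f (a + p.part b - b) + f (a - N) := by
    rw [Finset.sum_range_succ, h N le_rfl]; simp
  rw [Finset.sum_range_succ'] at hfull ⊢
  simp only [hrow]
  have key : (∑ b ∈ Finset.range N,
        if p.part (b + 1) < p.part b then f (a + p.part b - 1 - b) else 0) -
      (∑ b ∈ Finset.range N, if (b + 1 = 0 ∨ p.part (b + 1) < p.part (b + 1 - 1)) then
      f (a + p.part (b + 1) - ((b + 1 : ℕ) : ℤ)) else 0) =
      ∑ b ∈ Finset.range N, f (a + p.part b - 1 - b) -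
      ∑ b ∈ Finset.range N, f (a + p.part (b + 1) - ((b + 1 : ℕ) : ℤ)) := by
    rw [← Finset.sum_sub_distrib, ← Finset.sum_sub_distrib]
    refine Finset.sum_congr rfl fun b _ => ?_
    by_cases hb : p.part (b + 1) < p.part b
    · simp [hb]
    · have : p.part (b + 1) = p.part b := le_antisymm (p.antitone (Nat.le_succ b)) (by omega)
      simp only [this]
      push_cast
      rw [show a + (p.part b : ℤ) - (b + 1) = a + p.part b - 1 - b by ring]
      simp
  simp only [Finset.sum_add_distrib, Finset.sum_sub_distrib] at htel ⊢
  simp only [true_or, if_true]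
  linarith

theorem nodeCount_eq {r : ℕ} (e : ℕ) (a : Fin r → ℤ) (lam : Multipartition r) (N M : ℕ)
    (h : ∀ j, (∀ b, N ≤ b → (lam j).part b = 0) ∧ ∀ b, (lam j).part b ≤ M) (i : ℤ) :
    (nodeCount e a lam i : ℤ) = ∑ j, ∑ b ∈ Finset.range N,
      ∑ c ∈ Finset.range ((lam j).part b), resInd e i (a j + c - b) := by
  unfold nodeCount resInd
  rw [count_eq lam N M h (fun x => (a x.2.2 + (x.2.1 : ℤ) - (x.1 : ℤ)) % (e : ℤ) = i % e)]
  refine Finset.sum_congr rfl fun j _ => Finset.sum_congr rfl fun b _ =>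
    Finset.sum_congr rfl fun c _ => ?_
  congr 1

theorem hub_eq {r : ℕ} (e : ℕ) (a : Fin r → ℤ) (lam : Multipartition r) (i : ℤ) :
    hub e a lam i = 2 * (nodeCount e a lam i : ℤ) - nodeCount e a lam (i - 1)
      - nodeCount e a lam (i + 1) - ∑ j, resInd e i (a j) := by
  obtain ⟨N, M, h⟩ := exists_bounds lam
  simp only [nodeCount_eq e a lam N M h, sub_eq_add_neg i 1, resInd_shift]
  simp only [sub_neg_eq_add, Finset.mul_sum, ← Finset.sum_sub_distrib]
  unfold hub
  refine Finset.sum_congr rfl fun j _ => ?_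
  unfold delta removableCount addableCount
  rw [rem_eq _ N (h j).1, add_eq _ N (h j).1, rem_sub_add _ N (h j).1]

theorem msize_eq {r : ℕ} (e : ℕ) (he : 2 ≤ e) (a : Fin r → ℤ) (lam : Multipartition r) :
    (msize lam : ℤ) = ∑ i ∈ Finset.range e, (nodeCount e a lam (i : ℤ) : ℤ) := by
  obtain ⟨N, M, h⟩ := exists_bounds lam
  have h1 := count_eq lam N M h (fun _ => True)
  simp only [and_true, if_true] at h1
  unfold msize diag
  rw [h1]
  simp only [nodeCount_eq e a lam N M h]
  conv_rhs => rw [Finset.sum_comm]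
  refine Finset.sum_congr rfl fun j _ => ?_
  conv_rhs => rw [Finset.sum_comm]
  refine Finset.sum_congr rfl fun b _ => ?_
  conv_rhs => rw [Finset.sum_comm]
  refine Finset.sum_congr rfl fun c _ => ?_
  rw [sum_resInd e he]

theorem nodeCount_periodic {r : ℕ} (e : ℕ) (a : Fin r → ℤ) (lam : Multipartition r) (i : ℤ) :
    nodeCount e a lam (i + e) = nodeCount e a lam i := by
  unfold nodeCount
  simp

theorem const_of_harmonic (e : ℕ) (he : 2 ≤ e) (d : ℤ → ℤ) (hp : ∀ i, d (i + e) = d i)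
    (hh : ∀ i, 2 * d i = d (i - 1) + d (i + 1)) (i : ℤ) : d (i + 1) = d i := by
  have hlin : ∀ n : ℕ, d (i + n) = d i + n * (d (i + 1) - d i) ∧
      d (i + n + 1) = d i + (n + 1) * (d (i + 1) - d i) := by
    intro n
    induction n with
    | zero => simp
    | succ n ih =>
      have := hh (i + n + 1)
      rw [show i + (n : ℤ) + 1 - 1 = i + n by ring] at this
      push_cast
      rw [show i + ((n : ℤ) + 1) = i + n + 1 by ring]
      refine ⟨ih.2, ?_⟩
      linarith [ih.1, ih.2]
  have h1 := (hlin e).1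
  rw [hp] at h1
  have h2 : (e : ℤ) * (d (i + 1) - d i) = 0 := by linarith
  rcases mul_eq_zero.1 h2 with h | h
  · omega
  · linarith

/-- Proposition 3.2(2) with the block classification: two
multipartitions of the same `n` have the same hub iff they have the same residue
multiset, i.e. the same number of nodes of each residue. -/
theorem stmt_16 {e r : ℕ} (he : 2 ≤ e) (hr : 0 < r) (a : Fin r → ℤ)
    (lam mu : Multipartition r) (hsize : msize lam = msize mu) :
    SameHub e a lam mu ↔ ∀ i : ℤ, nodeCount e a lam i = nodeCount e a mu i := by
  constructor
  · intro hs
    let d : ℤ → ℤ := fun i => (nodeCount e a lam i : ℤ) - nodeCount e a mu i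
    have hp : ∀ i, d (i + e) = d i := fun i => by
      simp only [d, nodeCount_periodic]
    have hh : ∀ i, 2 * d i = d (i - 1) + d (i + 1) := fun i => by
      have := hs i
      rw [hub_eq, hub_eq] at this
      simp only [d]
      linarith
    have hstep := const_of_harmonic e he d hp hh
    have hconst : ∀ i, d i = d 0 := by
      intro i
      induction i using Int.induction_on with
      | zero => rfl
      | succ n ih => rw [hstep, ih]
      | pred n ih =>
        have := hstep (-(n : ℤ) - 1)
        rw [sub_add_cancel] at this
        rw [← this, ih]
    have hsum : ∑ i ∈ Finset.range e, d (i : ℤ) = 0 := by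
      simp only [d, Finset.sum_sub_distrib]
      rw [← msize_eq e he, ← msize_eq e he, hsize, sub_self]
    rw [Finset.sum_congr rfl (fun (i : ℕ) _ => hconst (i : ℤ))] at hsum
    simp only [Finset.sum_const, Finset.card_range, nsmul_eq_mul] at hsum
    have h0 : d 0 = 0 := by
      rcases mul_eq_zero.1 hsum with h | h
      · omega
      · exact h
    intro i
    have := hconst i
    rw [h0] at this
    simp only [d] at this
    omega
  · intro hc i
    rw [hub_eq, hub_eq, hc, hc, hc]

end AK
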